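/- Let 𝕏 = {p_1,…,p_s} ⊆ ℙ^n_K be a set of s distinct K-rational points with r_𝕏 ≥ 2, none lying on Z(X_0), and for j = 1,…,s let f_j ∈ R_{r_𝕏} be the separator of 𝕏∖{p_j} in 𝕏 with f_j(p_j) = 1 and f_j(p_k) = 0 for k ≠ j. Then 𝕏 is a Cayley–Bacharach scheme if and only if x_0^{r_𝕏−2}·f_j ∉ (δ_𝕏)_{2r_𝕏−2} for all j = 1,…,s. -/

import Mathlib

noncomputable section

/-! An algebraic model for a 0-dimensional subscheme `𝕏 ⊆ ℙⁿ_K` whose support avoids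
the hyperplane `Z(X₀)`.  The scheme is recorded through the local rings
`𝒪_{𝕏,p_j}` at the points `p_1, …, p_s` of its support, together with the germ map
sending a homogeneous polynomial `F` of degree `i` to the tuple of germs
`(F_{p_1}, …, F_{p_s})`; this is the degree-`i` component of the injection
`ĩ : R → Q^h(R) ≅ ∏_j 𝒪_{𝕏,p_j}[T_j, T_j⁻¹]`, where every graded component of
`Q^h(R)` is identified with `Γ = ∏_j 𝒪_{𝕏,p_j}` by dropping the powers of the `T_j`.
Since `x₀` has germ `1` at every point, the homogeneous coordinate ring
`R = P/I_𝕏` is faithfully encoded by the chain of subspaces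
`R_i ≅ V_i = germ(P_i) ⊆ Γ` (with `V_i ⊆ V_{i+1}`, and `V_i = Γ` for `i ≫ 0`). -/

/-- The data of one (fat) point of a 0-dimensional scheme: a finite local `K`-algebra. -/
structure PointData (K : Type) [Field K] : Type 1 where
  carrier : Type
  [ring : CommRing carrier]
  [alg : Algebra K carrier]
  [loc : IsLocalRing carrier]
  [findim : FiniteDimensional K carrier]

attribute [instance] PointData.ring PointData.alg PointData.loc PointData.findim

/-- A model of a 0-dimensional subscheme of `ℙⁿ_K`, no point of whose support lies
on `Z(X₀)` (coordinates being chosen so that each point has `X₀`-coordinate 1, the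
germ of `x₀` at every point is `1`). -/
structure ZeroDimScheme (K : Type) [Field K] (n : ℕ) : Type 1 where
  /-- the number of points in the support -/
  s : ℕ
  spos : 0 < s
  /-- the local rings `𝒪_{𝕏,p_j}` -/
  pt : Fin s → PointData K
  /-- the germ map: for `F` homogeneous of degree `i` this is the degree-`i`
  component of `ĩ : R → Q^h(R)`, i.e. `F ↦ (F_{p_1}, …, F_{p_s})` -/
  germ : MvPolynomial (Fin (n + 1)) K →ₐ[K] ∀ j, (pt j).carrier
  /-- the germ of `X₀` at each point is `1` -/
  germ_X0 : germ (MvPolynomial.X 0) = 1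
  /-- in all large degrees, the germ map is surjective onto `∏_j 𝒪_{𝕏,p_j}`
  (this characterizes `I_𝕏` as the full homogeneous vanishing ideal of the scheme) -/
  eventually_surj : ∃ N : ℕ, ∀ i, N ≤ i →
    Submodule.map germ.toLinearMap
      (MvPolynomial.homogeneousSubmodule (Fin (n + 1)) K i) = ⊤

namespace ZeroDimScheme

variable {K : Type} [Field K] {n : ℕ}

/-- `Γ = ∏_j 𝒪_{𝕏,p_j}`, the common model for every graded component of `Q^h(R)`. -/
abbrev Gamma (S : ZeroDimScheme K n) : Type := ∀ j, (S.pt j).carrier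

variable (S : ZeroDimScheme K n)

/-- `V i ⊆ Γ` is the image of the degree-`i` component `R_i` of the homogeneous
coordinate ring `R` under (the degree-`i` component of) `ĩ`; we identify `R_i ≅ V i`. -/
def V (i : ℕ) : Submodule K S.Gamma :=
  Submodule.map S.germ.toLinearMap
    (MvPolynomial.homogeneousSubmodule (Fin (n + 1)) K i)

/-- `R_i` for `i : ℤ` (zero in negative degrees). -/
def Vz (i : ℤ) : Submodule K S.Gamma := if 0 ≤ i then S.V i.toNat else ⊥

/-- `deg 𝕏 = Σ_j dim_K 𝒪_{𝕏,p_j}`. -/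
def degX : ℕ := Module.finrank K S.Gamma

/-- The Hilbert function `HF_𝕏(i) = dim_K R_i`. -/
def HF (i : ℕ) : ℕ := Module.finrank K (S.V i)

/-- The Hilbert function on `ℤ`. -/
def HFz (i : ℤ) : ℕ := Module.finrank K (S.Vz i)

/-- The regularity index `r_𝕏`: the least `r` with `HF_𝕏(i) = deg 𝕏` for all `i ≥ r`. -/
def rX : ℕ := sInf {r : ℕ | ∀ i, r ≤ i → S.HF i = S.degX}

/-- `κ_j = dim_K κ(p_j)`, the residue field of `𝕏` at `p_j`. -/
def kappa (j : Fin S.s) : ℕ :=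
  Module.finrank K
    ((S.pt j).carrier ⧸
      Submodule.restrictScalars K (IsLocalRing.maximalIdeal (S.pt j).carrier))

/-- `sj` is a socle element of `𝒪_{𝕏,p_j}`, i.e. `sj ∈ Ann(𝔪_{𝕏,p_j})`.  By
Proposition 1.2, the maximal `p_j`-subschemes `𝕐 ⊆ 𝕏` correspond 1-1 to the ideals
of `Γ` generated by `(0,…,0,sj,0,…,0)` with `sj` a *nonzero* socle element. -/
def IsSocle (j : Fin S.s) (sj : (S.pt j).carrier) : Prop :=
  ∀ b ∈ IsLocalRing.maximalIdeal (S.pt j).carrier, sj * b = 0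

/-- The ideal `U = ⟨(0,…,0,sj,0,…,0)⟩` of `Γ` corresponding to the maximal
`p_j`-subscheme `𝕐` determined by the socle element `sj`; one has `I_{𝕐/𝕏} = ĩ⁻¹(U)`. -/
def sepIdeal (j : Fin S.s) (sj : (S.pt j).carrier) : Submodule K S.Gamma :=
  Submodule.restrictScalars K (Ideal.span {(Pi.single j sj : S.Gamma)})

/-- The degree-`i` component `(I_{𝕐/𝕏})_i = R_i ∩ ĩ⁻¹(U)` of the ideal of the maximal
`p_j`-subscheme `𝕐` (given by the socle element `sj`) in `R`. -/
def IY (j : Fin S.s) (sj : (S.pt j).carrier) (i : ℕ) : Submodule K S.Gamma :=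
  S.V i ⊓ S.sepIdeal j sj

/-- `(I_{𝕐/𝕏})_i` for `i : ℤ`. -/
def IYz (j : Fin S.s) (sj : (S.pt j).carrier) (i : ℤ) : Submodule K S.Gamma :=
  S.Vz i ⊓ S.sepIdeal j sj

/-- The Hilbert function `HF_𝕐(i) = HF_𝕏(i) - dim_K (I_{𝕐/𝕏})_i` of the maximal
`p_j`-subscheme `𝕐` given by the socle element `sj`. -/
def HFY (j : Fin S.s) (sj : (S.pt j).carrier) (i : ℕ) : ℕ :=
  S.HF i - Module.finrank K (S.IY j sj i)

/-- `HF_𝕐` on `ℤ`. -/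
def HFYz (j : Fin S.s) (sj : (S.pt j).carrier) (i : ℤ) : ℕ :=
  S.HFz i - Module.finrank K (S.IYz j sj i)

/-- `α_{𝕐/𝕏} = min {i | (I_{𝕐/𝕏})_i ≠ 0}`. -/
def alphaY (j : Fin S.s) (sj : (S.pt j).carrier) : ℕ :=
  sInf {i : ℕ | S.IY j sj i ≠ ⊥}

/-- `μ(a) = min {i | (0,…,0,a T_j^i,0,…,0) ∈ ĩ(R)}` for `a ∈ 𝒪_{𝕏,p_j}`. -/
def mu (j : Fin S.s) (a : (S.pt j).carrier) : ℕ :=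
  sInf {i : ℕ | (Pi.single j a : S.Gamma) ∈ S.V i}

/-- `μ_{𝕐/𝕏}`, the maximal degree of a minimal separator of the maximal
`p_j`-subscheme `𝕐` given by the socle element `sj`; independently of all choices it
equals `max {μ(a·sj) | a ∈ 𝒪_{𝕏,p_j}, a·sj ≠ 0}`. -/
def muY (j : Fin S.s) (sj : (S.pt j).carrier) : ℕ :=
  sSup {m : ℕ | ∃ a : (S.pt j).carrier, a * sj ≠ 0 ∧ m = S.mu j (a * sj)}

/-- `deg_𝕏(p_j) = min {μ_{𝕐/𝕏} | 𝕐 a maximal p_j-subscheme of 𝕏}`. -/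
def degP (j : Fin S.s) : ℕ :=
  sInf {m : ℕ | ∃ sj : (S.pt j).carrier, S.IsSocle j sj ∧ sj ≠ 0 ∧ m = S.muY j sj}

/-- `𝕏` has the Cayley–Bacharach property of degree `d`: `deg_𝕏(p_j) ≥ d + 1` for all `j`. -/
def CBP (d : ℕ) : Prop := ∀ j : Fin S.s, d + 1 ≤ S.degP j

/-- `𝕏` is a Cayley–Bacharach scheme: it has `CBP(r_𝕏 - 1)`. -/
def CayleyBacharach : Prop := S.CBP (S.rX - 1)

/-- The residue class map `𝒪_{𝕏,p_j} → κ(p_j)` as a `K`-linear map. -/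
def resQ (j : Fin S.s) :
    (S.pt j).carrier →ₗ[K]
      ((S.pt j).carrier ⧸
        Submodule.restrictScalars K (IsLocalRing.maximalIdeal (S.pt j).carrier)) :=
  (Submodule.restrictScalars K (IsLocalRing.maximalIdeal (S.pt j).carrier)).mkQ

/-- The residue classes of `e 0, …, e (κ_j - 1)` form a `K`-basis of `κ(p_j)`. -/
def IsResidueBasis (j : Fin S.s) {m : ℕ} (e : Fin m → (S.pt j).carrier) : Prop :=
  LinearIndependent K (fun k => S.resQ j (e k)) ∧
    Submodule.span K (Set.range fun k => S.resQ j (e k)) = ⊤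

/-- A family `τ_j : 𝒪_{𝕏,p_j} → K` of trace maps: each `τ_j` is a generator of
`Hom_K(𝒪_{𝕏,p_j}, K)` as an `𝒪_{𝕏,p_j}`-module.  Such a family exists iff `𝕏` is
locally Gorenstein, and it induces a homogeneous trace map `σ` of degree zero of
`Q^h(R)/L₀` (componentwise). -/
def IsTraceFamily (τ : ∀ j, (S.pt j).carrier →ₗ[K] K) : Prop :=
  ∀ j, Function.Bijective
    (fun a : (S.pt j).carrier => (τ j).comp (LinearMap.mulRight K a))

/-- The total trace `Γ → K`, `y ↦ Σ_j τ_j (y_j)`; on the degree-`i` component of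
`Q^h(R)` the trace map `σ` is `q ↦ (Ttot τ q)·x₀^i`. -/
def Ttot (τ : ∀ j, (S.pt j).carrier →ₗ[K] K) : S.Gamma →ₗ[K] K :=
  ∑ j : Fin S.s, (τ j).comp (LinearMap.proj j)

/-- The degree-`k` component `(𝔠^σ_𝕏)_k ⊆ Q^h(R)_k ≅ Γ` of the Dedekind complementary
module: `g ∈ (𝔠^σ_𝕏)_k` iff `σ(g · R) ⊆ K[x₀]`, i.e. `Ttot τ (g·x) = 0` whenever
`x ∈ R_i` with `k + i < 0`. -/
def Cmod (τ : ∀ j, (S.pt j).carrier →ₗ[K] K) (k : ℤ) : Submodule K S.Gamma :=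
  ⨅ (i : ℕ) (_ : k + (i : ℤ) < 0) (x : S.Gamma) (_ : x ∈ S.V i),
    LinearMap.ker ((S.Ttot τ).comp (LinearMap.mulRight K x))

/-- The degree-`i` component `(δ^σ_𝕏)_i ⊆ Q^h(R)_i ≅ Γ` of the Dedekind different
`δ^σ_𝕏 = {f ∈ Q^h(R) | f · 𝔠^σ_𝕏 ⊆ R}`. -/
def delta (τ : ∀ j, (S.pt j).carrier →ₗ[K] K) (i : ℤ) : Submodule K S.Gamma :=
  ⨅ (k : ℤ) (g : S.Gamma) (_ : g ∈ S.Cmod τ k),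
    Submodule.comap (LinearMap.mulRight K g) (S.Vz (i + k))

/-- The Hilbert function of the Dedekind different. -/
def HFdelta (τ : ∀ j, (S.pt j).carrier →ₗ[K] K) (i : ℤ) : ℕ :=
  Module.finrank K (S.delta τ i)

/-- `𝕏` has minimal Dedekind different: `δ^σ_𝕏 = ⊕_{i ≥ 2 r_𝕏} R_i`
(recall `R_i ≅ Γ` for `i ≥ r_𝕏`). -/
def MinimalDedekind (τ : ∀ j, (S.pt j).carrier →ₗ[K] K) : Prop :=
  ∀ i : ℤ, S.delta τ i = if 2 * (S.rX : ℤ) ≤ i then ⊤ else ⊥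

/-- The degree-`i` component (`i ≥ 0`) of the conductor
`𝔉_{R̃/R} = {f ∈ R̃ | f·R̃ ⊆ R}` of `R` in `R̃ = ∏_j 𝒪_{𝕏,p_j}[T_j]`
(whose degree-`i` component is all of `Γ` for every `i ≥ 0`). -/
def cond (i : ℕ) : Submodule K S.Gamma :=
  ⨅ y : S.Gamma, Submodule.comap (LinearMap.mulRight K y) (S.V i)

/-- The conductor on `ℤ` (zero in negative degrees, where `R̃` vanishes). -/
def condZ (i : ℤ) : Submodule K S.Gamma := if 0 ≤ i then S.cond i.toNat else ⊥

/-- The degree-`i` component of the trace `tr(𝔠^σ_𝕏) = δ^σ_𝕏 · 𝔠^σ_𝕏` of the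
Dedekind complementary module. -/
def trC (τ : ∀ j, (S.pt j).carrier →ₗ[K] K) (i : ℤ) : Submodule K S.Gamma :=
  ⨆ (a : ℤ) (b : ℤ) (_ : a + b = i), S.delta τ a * S.Cmod τ b

/-- `𝕏` is nearly Gorenstein: `𝔪 ⊆ tr(𝔠^σ_𝕏)`. -/
def NearlyGorenstein (τ : ∀ j, (S.pt j).carrier →ₗ[K] K) : Prop :=
  ∀ i : ℤ, 1 ≤ i → S.Vz i ≤ S.trC τ i

/-- `𝕏` is almost Gorenstein: there is an exact sequence of graded `R`-modules
`0 → R → 𝔠^σ_𝕏(-r_𝕏) → C → 0` with `𝔪·C = 0`.  A degree-zero graded injection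
`R → 𝔠^σ_𝕏(-r_𝕏)` is multiplication by an element `g ∈ (𝔠^σ_𝕏)_{-r_𝕏}` with
`Ann_R(g) = 0`, and `𝔪·C = 0` means `𝔪 · 𝔠^σ_𝕏(-r_𝕏) ⊆ g·R`. -/
def AlmostGorenstein (τ : ∀ j, (S.pt j).carrier →ₗ[K] K) : Prop :=
  ∃ g ∈ S.Cmod τ (-(S.rX : ℤ)),
    (∀ i : ℕ, ∀ x ∈ S.V i, x * g = 0 → x = 0) ∧
    (∀ a : ℕ, 1 ≤ a → ∀ x ∈ S.V a, ∀ k : ℤ, ∀ h ∈ S.Cmod τ k,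
      x * h ∈ Submodule.map (LinearMap.mulRight K g) (S.Vz ((a : ℤ) + k + (S.rX : ℤ))))

/-- `𝕏` is arithmetically Gorenstein, i.e. `R` is a Gorenstein ring; equivalently the
canonical module is free of rank one: `𝔠^σ_𝕏 = g·R` for some `g ∈ (𝔠^σ_𝕏)_{-r_𝕏}`. -/
def ArithGorenstein (τ : ∀ j, (S.pt j).carrier →ₗ[K] K) : Prop :=
  ∃ g ∈ S.Cmod τ (-(S.rX : ℤ)),
    ∀ k : ℤ, S.Cmod τ k = Submodule.map (LinearMap.mulRight K g) (S.Vz (k + (S.rX : ℤ)))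

/-- `𝕏` is level: the socle of `R̄ = R/⟨x₀⟩` equals `R̄_{r_𝕏}`, i.e. no nonzero
homogeneous element of `R̄` of degree `< r_𝕏` is annihilated by `𝔪̄` (recall
`R̄_i ≅ V i / V (i-1)` and `x₀`-multiplication preserves germs). -/
def Level : Prop :=
  ∀ i : ℕ, i < S.rX → ∀ x ∈ S.V i,
    (∀ a : ℕ, 1 ≤ a → ∀ y ∈ S.V a, x * y ∈ S.Vz ((i : ℤ) + (a : ℤ) - 1)) →
      x ∈ S.Vz ((i : ℤ) - 1)

/-- The subspace `{x ∈ Γ | x_k = 0 for k ≠ j}` of `Γ`: the degreewise model for the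
ideal of the subscheme `𝕐_j ⊆ 𝕏` with `I_{𝕐_j} = ∩_{k ≠ j} I_k`. -/
def Wj (j : Fin S.s) : Submodule K S.Gamma :=
  ⨅ (k : Fin S.s) (_ : k ≠ j),
    LinearMap.ker (LinearMap.proj k : S.Gamma →ₗ[K] (S.pt k).carrier)

/-- `(I_{𝕐_j/𝕏})_i` for the subscheme `𝕐_j` complementary to `p_j`. -/
def IW (j : Fin S.s) (i : ℕ) : Submodule K S.Gamma := S.V i ⊓ S.Wj j

/-- The Hilbert function of the subscheme `𝕐_j` complementary to `p_j`. -/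
def HFW (j : Fin S.s) (i : ℕ) : ℕ := S.HF i - Module.finrank K (S.IW j i)

/-- `α_{𝕐_j/𝕏}` for the subscheme `𝕐_j` complementary to `p_j`. -/
def alphaW (j : Fin S.s) : ℕ := sInf {i : ℕ | S.IW j i ≠ ⊥}

/-- The subspace `{x ∈ Γ | x_k = 0 for k ∉ {j₁, j₂}}` of `Γ`: the degreewise model for
the ideal in `R` of the subscheme of the reduced scheme `𝕏` complementary to `{p_{j₁}, p_{j₂}}`. -/
def Wpair (j1 j2 : Fin S.s) : Submodule K S.Gamma :=
  ⨅ (k : Fin S.s) (_ : k ≠ j1) (_ : k ≠ j2),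
    LinearMap.ker (LinearMap.proj k : S.Gamma →ₗ[K] (S.pt k).carrier)

/-- The homogeneous vanishing ideal `I_𝕏 ⊆ P`. -/
def IX : Ideal (MvPolynomial (Fin (n + 1)) K) :=
  Ideal.span {F | (∃ i : ℕ, F ∈ MvPolynomial.homogeneousSubmodule (Fin (n + 1)) K i) ∧
    S.germ F = 0}

/-- The `n×n`-minor (Jacobian determinant with respect to `X_1, …, X_n`) of an
`n`-tuple of polynomials. -/
def jacMinor (Fs : Fin n → MvPolynomial (Fin (n + 1)) K) : MvPolynomial (Fin (n + 1)) K :=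
  Matrix.det (Matrix.of fun a b : Fin n => MvPolynomial.pderiv (Fin.succ b) (Fs a))

/-- The preimage in `P` of the Kähler different `ϑ_𝕏 ⊆ R`: the ideal generated by
`I_𝕏` together with all `n×n` minors of the Jacobian matrix of elements of `I_𝕏`. -/
def KaehlerIdeal : Ideal (MvPolynomial (Fin (n + 1)) K) :=
  S.IX ⊔ Ideal.span {m | ∃ Fs : Fin n → MvPolynomial (Fin (n + 1)) K,
    (∀ a, Fs a ∈ S.IX) ∧ m = jacMinor Fs}

/-- The degree-`i` component of the Kähler different `ϑ_𝕏 ⊆ R`, viewed inside `Γ`. -/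
def thetaPiece (i : ℕ) : Submodule K S.Gamma :=
  Submodule.map S.germ.toLinearMap
    (Submodule.restrictScalars K S.KaehlerIdeal ⊓
      MvPolynomial.homogeneousSubmodule (Fin (n + 1)) K i)

end ZeroDimScheme

end

/-! The trace form `(f, g) ↦ σ(fg)` on `Γ` is nondegenerate, so `(𝔠_𝕏)_k` with `k = -(d + 1)` is
the orthogonal complement of `R_d`.  Let `I` be the ideal of `Γ` generated by a socle element
of the local ring at `p_j`.

If `I ⊆ R_d`, then an element `g ∈ (𝔠_𝕏)_k` with `k < -d` is orthogonal to the ideal `I`, so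
`I · g = 0`, and for `k ≥ -d` one has `I · g ⊆ I ⊆ R_d ⊆ R_{2d+k}`; hence `I ⊆ (δ_𝕏)_{2d}`.
Conversely, if `f ∈ I` is not in `R_d`, then some `g` orthogonal to `R_d` has `σ(fg) ≠ 0`.  Since
`f` is killed by the maximal ideal, the component of `g` at `p_j` is a unit, so `I · g = I`, and
`I ⊆ (δ_𝕏)_{2d}` would force `f ∈ I · g ⊆ R_{d-1} ⊆ R_d`.

So for locally Gorenstein `𝕏` the conditions `I ⊆ R_d` and `I ⊆ (δ_𝕏)_{2d}` agree, and the
Cayley–Bacharach property of degree `d` says that the first one fails for all socle elements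
`≠ 0`.  The case of rational points and `d = r_𝕏 - 1` is the theorem. -/

theorem exists_ne_zero_forall_mem_maximalIdeal_mul_eq_zero (A : Type*) [CommRing A]
    [IsLocalRing A] [IsArtinianRing A] :
    ∃ a : A, a ≠ 0 ∧ ∀ b ∈ IsLocalRing.maximalIdeal A, a * b = 0 := by
  obtain ⟨p, hp⟩ := associatedPrimes.nonempty A A
  obtain ⟨hprime, a, hpa⟩ := isAssociatedPrime_iff.mp hp
  have hmax : p = IsLocalRing.maximalIdeal A :=
    IsLocalRing.eq_maximalIdeal ((IsArtinianRing.isPrime_iff_isMaximal p).mp hprime)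
  have mem_iff (b : A) : b ∈ p ↔ b * a = 0 := by
    rw [hpa, Submodule.mem_colon_singleton, Submodule.mem_bot, smul_eq_mul]
  refine ⟨a, fun ha => hprime.one_notMem ?_, fun b hb => ?_⟩
  · rw [mem_iff, ha, mul_zero]
  · rw [mul_comm, ← mem_iff, hmax]
    exact hb

namespace ZeroDimScheme

variable {K : Type} [Field K] {n : ℕ} (S : ZeroDimScheme K n)

section CoordinateRing

theorem V_mono : Monotone S.V := by
  refine monotone_nat_of_le_succ fun i => ?_
  rintro _ ⟨F, hF, rfl⟩
  refine ⟨F * MvPolynomial.X 0, ?_, by simp [S.germ_X0]⟩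
  exact MvPolynomial.IsHomogeneous.mul hF (MvPolynomial.isHomogeneous_X K 0)

theorem exists_V_eq_top : ∃ N, S.V N = ⊤ :=
  S.eventually_surj.imp fun N hN => hN N le_rfl

theorem Vz_le_V {i : ℤ} {d : ℕ} (hid : i ≤ d) : S.Vz i ≤ S.V d := by
  rw [Vz]
  split_ifs
  · exact S.V_mono (by omega)
  · exact bot_le

theorem V_le_Vz {d : ℕ} {i : ℤ} (hdi : d ≤ i) : S.V d ≤ S.Vz i := by
  rw [Vz, if_pos (by omega)]
  exact S.V_mono (by omega)

end CoordinateRing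

section Separators

variable (j : Fin S.s) (a : (S.pt j).carrier) (d : ℕ)

theorem sepIdeal_le_iff {N : Submodule K S.Gamma} :
    S.sepIdeal j a ≤ N ↔ ∀ b : (S.pt j).carrier, (Pi.single j (b * a) : S.Gamma) ∈ N := by
  constructor
  · intro hle b
    refine hle (Ideal.mem_span_singleton'.mpr ⟨Pi.single j b, ?_⟩)
    rw [← Pi.single_mul_right, Pi.single_eq_same]
  · intro hmem x hx
    obtain ⟨y, rfl⟩ := Ideal.mem_span_singleton'.mp hx
    rw [← Pi.single_mul_right]
    exact hmem (y j)

theorem mu_le_iff : S.mu j a ≤ d ↔ (Pi.single j a : S.Gamma) ∈ S.V d := by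
  have hne : {i | (Pi.single j a : S.Gamma) ∈ S.V i}.Nonempty :=
    S.exists_V_eq_top.imp fun N hN => by simp [hN]
  have hmu : (Pi.single j a : S.Gamma) ∈ S.V (S.mu j a) := Nat.sInf_mem hne
  exact ⟨fun hle => S.V_mono hle hmu, fun hmem => Nat.sInf_le hmem⟩

theorem muY_le_iff : S.muY j a ≤ d ↔ S.sepIdeal j a ≤ S.V d := by
  obtain ⟨N, hN⟩ := S.exists_V_eq_top
  have hbdd : BddAbove {m | ∃ b, b * a ≠ 0 ∧ m = S.mu j (b * a)} := by
    refine ⟨N, ?_⟩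
    rintro _ ⟨b, -, rfl⟩
    exact (S.mu_le_iff j (b * a) N).mpr (hN ▸ Submodule.mem_top)
  rw [muY, csSup_le_iff' hbdd, sepIdeal_le_iff]
  constructor
  · intro hle b
    rcases eq_or_ne (b * a) 0 with hba | hba
    · rw [hba, Pi.single_zero]
      exact Submodule.zero_mem _
    · exact (S.mu_le_iff j _ d).mp (hle _ ⟨b, hba, rfl⟩)
  · rintro hmem _ ⟨b, -, rfl⟩
    exact (S.mu_le_iff j _ d).mpr (hmem b)

theorem exists_isSocle_ne_zero : ∃ a : (S.pt j).carrier, S.IsSocle j a ∧ a ≠ 0 := by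
  have : IsArtinianRing (S.pt j).carrier := IsArtinianRing.of_finite K _
  obtain ⟨a, ha, hsocle⟩ :=
    exists_ne_zero_forall_mem_maximalIdeal_mul_eq_zero (S.pt j).carrier
  exact ⟨a, hsocle, ha⟩

theorem lt_degP_iff :
    d < S.degP j ↔
      ∀ a : (S.pt j).carrier, S.IsSocle j a → a ≠ 0 → ¬ S.sepIdeal j a ≤ S.V d := by
  have hne : {m | ∃ a, S.IsSocle j a ∧ a ≠ 0 ∧ m = S.muY j a}.Nonempty := by
    obtain ⟨a, hsocle, ha⟩ := S.exists_isSocle_ne_zero j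
    exact ⟨_, a, hsocle, ha, rfl⟩
  rw [degP, ← Nat.succ_le_iff, le_csInf_iff' hne]
  constructor
  · intro hle a hsocle ha
    rw [← muY_le_iff, not_le]
    exact hle ⟨a, hsocle, ha, rfl⟩
  · rintro hnot _ ⟨a, hsocle, ha, rfl⟩
    exact Nat.succ_le_of_lt (not_le.mp ((S.muY_le_iff j a d).not.mpr (hnot a hsocle ha)))

variable {S j a}

theorem IsSocle.isUnit_of_mul_ne_zero (ha : S.IsSocle j a) {b : (S.pt j).carrier}
    (hab : a * b ≠ 0) : IsUnit b := by
  by_contra hb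
  exact hab (ha b ((IsLocalRing.mem_maximalIdeal b).mpr hb))

theorem sepIdeal_le_iff_of_finrank_eq_one (hj : Module.finrank K (S.pt j).carrier = 1)
    (ha : a ≠ 0) {N : Submodule K S.Gamma} :
    S.sepIdeal j a ≤ N ↔ (Pi.single j 1 : S.Gamma) ∈ N := by
  rw [sepIdeal_le_iff]
  constructor
  · intro hmem
    obtain ⟨c, hc⟩ := (finrank_eq_one_iff_of_nonzero' a ha).mp hj 1
    rw [← hc, ← smul_one_mul]
    exact hmem (c • 1)
  · intro hmem b
    obtain ⟨c, hc⟩ := (finrank_eq_one_iff_of_nonzero' 1 one_ne_zero).mp hj (b * a)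
    rw [← hc, Pi.single_smul]
    exact N.smul_mem c hmem

theorem forall_isSocle_not_sepIdeal_le_iff_of_finrank_eq_one
    (hj : Module.finrank K (S.pt j).carrier = 1) {N : Submodule K S.Gamma} :
    (∀ a : (S.pt j).carrier, S.IsSocle j a → a ≠ 0 → ¬ S.sepIdeal j a ≤ N) ↔
      (Pi.single j 1 : S.Gamma) ∉ N := by
  constructor
  · intro hnot
    obtain ⟨a, hsocle, ha⟩ := S.exists_isSocle_ne_zero j
    rw [← sepIdeal_le_iff_of_finrank_eq_one hj ha]
    exact hnot a hsocle ha
  · intro hnot a _ ha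
    rwa [sepIdeal_le_iff_of_finrank_eq_one hj ha]

end Separators

section Trace

variable {S} {τ : ∀ j, (S.pt j).carrier →ₗ[K] K}

theorem Ttot_apply (x : S.Gamma) : S.Ttot τ x = ∑ j, τ j (x j) := by
  simp [Ttot, LinearMap.sum_apply]

theorem Ttot_single (j : Fin S.s) (a : (S.pt j).carrier) :
    S.Ttot τ (Pi.single j a) = τ j a := by
  rw [Ttot_apply, Finset.sum_eq_single j, Pi.single_eq_same]
  · intro k _ hkj
    rw [Pi.single_eq_of_ne hkj, map_zero]
  · simp

theorem IsTraceFamily.exists_Ttot_mul_eq (hτ : S.IsTraceFamily τ) (φ : S.Gamma →ₗ[K] K) :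
    ∃ g : S.Gamma, ∀ x, S.Ttot τ (x * g) = φ x := by
  choose g hg using fun j =>
    (hτ j).surjective (φ.comp (LinearMap.single K (fun k => (S.pt k).carrier) j))
  refine ⟨g, fun x => ?_⟩
  calc S.Ttot τ (x * g) = ∑ j, τ j (x j * g j) := Ttot_apply _
    _ = ∑ j, φ (Pi.single j (x j)) :=
      Finset.sum_congr rfl fun j _ => LinearMap.congr_fun (hg j) (x j)
    _ = φ x := by rw [← map_sum, Finset.univ_sum_single]

theorem IsTraceFamily.eq_zero_of_forall_Ttot_mul_eq_zero (hτ : S.IsTraceFamily τ)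
    {x : S.Gamma} (hx : ∀ y, S.Ttot τ (y * x) = 0) : x = 0 := by
  funext j
  refine (hτ j).injective (LinearMap.ext fun b => ?_)
  have hj : S.Ttot τ (Pi.single j b * x) = 0 := hx _
  rw [← Pi.single_mul_left, Ttot_single] at hj
  simpa using hj

theorem mem_Cmod {k : ℤ} {g : S.Gamma} :
    g ∈ S.Cmod τ k ↔ ∀ i : ℕ, k + i < 0 → ∀ x ∈ S.V i, S.Ttot τ (x * g) = 0 := by
  simp [Cmod, Submodule.mem_iInf, mul_comm]

theorem mem_delta {i : ℤ} {f : S.Gamma} :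
    f ∈ S.delta τ i ↔ ∀ k, ∀ g ∈ S.Cmod τ k, f * g ∈ S.Vz (i + k) := by
  simp [delta, Submodule.mem_iInf]

theorem mem_Cmod_neg_succ {d : ℕ} {g : S.Gamma} :
    g ∈ S.Cmod τ (-(d + 1)) ↔ ∀ x ∈ S.V d, S.Ttot τ (x * g) = 0 := by
  rw [mem_Cmod]
  refine ⟨fun hg => hg d (by omega), fun hg i hi x hx => hg x (S.V_mono ?_ hx)⟩
  omega

end Trace

section DedekindDifferent

variable {S} {τ : ∀ j, (S.pt j).carrier →ₗ[K] K}

theorem IsTraceFamily.ideal_le_delta_of_le_V (hτ : S.IsTraceFamily τ) {I : Ideal S.Gamma}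
    {d : ℕ} (hI : I.restrictScalars K ≤ S.V d) {i : ℤ} (hdi : 2 * d ≤ i) :
    I.restrictScalars K ≤ S.delta τ i := by
  intro f hf
  refine mem_delta.mpr fun k g hg => ?_
  rcases lt_or_ge (k + d) 0 with hk | hk
  · have hfg : f * g = 0 := hτ.eq_zero_of_forall_Ttot_mul_eq_zero fun y => by
      rw [← mul_assoc]
      exact mem_Cmod.mp hg d hk _ (hI (I.mul_mem_left y hf))
    rw [hfg]
    exact Submodule.zero_mem _
  · exact S.V_le_Vz (by omega) (hI (I.mul_mem_right g hf))

theorem IsTraceFamily.sepIdeal_le_V_of_le_delta (hτ : S.IsTraceFamily τ) {j : Fin S.s}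
    {a : (S.pt j).carrier} (ha : S.IsSocle j a) {i : ℤ} (hle : S.sepIdeal j a ≤ S.delta τ i)
    {d : ℕ} (hid : i ≤ 2 * d + 1) : S.sepIdeal j a ≤ S.V d := by
  rw [sepIdeal_le_iff] at hle ⊢
  intro b
  by_contra hnot
  obtain ⟨φ, hφ, hφV⟩ := Submodule.exists_le_ker_of_notMem hnot
  obtain ⟨g, hg⟩ := hτ.exists_Ttot_mul_eq φ
  have hgC : g ∈ S.Cmod τ (-(d + 1)) :=
    mem_Cmod_neg_succ.mpr fun x hx => (hg x).trans (hφV hx)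
  have hgj : IsUnit (g j) := ha.isUnit_of_mul_ne_zero fun hag => hφ <| by
    rw [← hg, ← Pi.single_mul_left, mul_assoc, hag, mul_zero, Pi.single_zero, map_zero]
  obtain ⟨u, hu⟩ := hgj.exists_left_inv
  have hmem := mem_delta.mp (hle (u * b)) _ g hgC
  have hmul : u * b * a * g j = b * a := by linear_combination (b * a) * hu
  rw [← Pi.single_mul_left, hmul] at hmem
  exact hnot (S.Vz_le_V (by omega) hmem)

theorem IsTraceFamily.sepIdeal_le_delta_two_mul_iff (hτ : S.IsTraceFamily τ) {j : Fin S.s}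
    {a : (S.pt j).carrier} (ha : S.IsSocle j a) (d : ℕ) :
    S.sepIdeal j a ≤ S.delta τ (2 * d) ↔ S.sepIdeal j a ≤ S.V d :=
  ⟨fun hle => hτ.sepIdeal_le_V_of_le_delta ha hle (by omega),
    fun hle => hτ.ideal_le_delta_of_le_V hle le_rfl⟩

end DedekindDifferent

end ZeroDimScheme

theorem dedekind_CB_stmt13_general {K : Type} [Field K] {n : ℕ} {S : ZeroDimScheme K n}
    {τ : ∀ j, (S.pt j).carrier →ₗ[K] K} (hτ : S.IsTraceFamily τ) (d : ℕ) :
    S.CBP d ↔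
      ∀ (j : Fin S.s) (a : (S.pt j).carrier), S.IsSocle j a → a ≠ 0 →
        ¬ S.sepIdeal j a ≤ S.delta τ (2 * d) := by
  refine forall_congr' fun j => (S.lt_degP_iff j d).trans ?_
  refine forall_congr' fun a => forall_congr' fun ha => ?_
  rw [hτ.sepIdeal_le_delta_two_mul_iff ha]

/-- Corollary 5.10 / `corSec4.10`.  Let `𝕏 = {p_1, …, p_s} ⊆ ℙⁿ_K`
be a set of distinct `K`-rational points with `r_𝕏 ≥ 2`, none on `Z(X₀)`, and for
each `j` let `f_j ∈ R_{r_𝕏}` be the separator of `𝕏∖{p_j}` in `𝕏` with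
`f_j(p_j) = 1` and `f_j(p_k) = 0` for `k ≠ j` (so `ĩ(f_j) = Pi.single j 1` in `Γ`).
Then `𝕏` is a Cayley–Bacharach scheme iff `x₀^{r_𝕏-2}·f_j ∉ (δ_𝕏)_{2r_𝕏-2}` for
all `j`; under the degreewise identification `x₀^{r_𝕏-2}·f_j` is the element
`Pi.single j 1` of the degree-`2r_𝕏-2` part of `Q^h(R)`. -/
theorem dedekind_CB_stmt13 (K : Type) [Field K] (n : ℕ) (S : ZeroDimScheme K n)
    (hrat : ∀ j, Module.finrank K (S.pt j).carrier = 1)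
    (τ : ∀ j, (S.pt j).carrier →ₗ[K] K) (hτ : S.IsTraceFamily τ)
    (hτ1 : ∀ j, τ j 1 = 1) (hr : 2 ≤ S.rX) :
    S.CayleyBacharach ↔
      ∀ j : Fin S.s,
        (Pi.single j (1 : (S.pt j).carrier) : S.Gamma) ∉
          S.delta τ (2 * (S.rX : ℤ) - 2) := by
  have hdeg : 2 * (S.rX : ℤ) - 2 = 2 * (S.rX - 1 : ℕ) := by omega
  rw [hdeg]
  exact (dedekind_CB_stmt13_general hτ (S.rX - 1)).trans <| forall_congr' fun j =>
    ZeroDimScheme.forall_isSocle_not_sepIdeal_le_iff_of_finrank_eq_one (hrat j)
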